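/- Let X be a topological graph. The following are equivalent: (1) X is homeomorphic to the circle S¹; (3) 0 ∈ P_h(X), i.e., some group of homeomorphisms of X acts minimally (has no proper nonempty closed invariant subset); (4) every vertex of X has degree 2. Moreover in that case P_h(X) = {0,1,2,...} ∪ {+∞}. -/

import Mathlib

open Set Topology unitInterval

noncomputable section

/-- Group structure on self-homeomorphisms (composition). -/
instance homeoGroup {X : Type*} [TopologicalSpace X] : Group (X ≃ₜ X) where
  mul f g := g.trans f
  one := Homeomorph.refl X
  inv := Homeomorph.symm
  mul_assoc _ _ _ := Homeomorph.ext fun _ => rfl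
  one_mul _ := Homeomorph.ext fun _ => rfl
  mul_one _ := Homeomorph.ext fun _ => rfl
  inv_mul_cancel f := Homeomorph.ext fun x => f.symm_apply_apply x

/-- A set is invariant under a group of homeomorphisms. -/
def InvariantUnder {X : Type*} [TopologicalSpace X] (G : Subgroup (X ≃ₜ X)) (Y : Set X) : Prop :=
  ∀ g ∈ G, ∀ y ∈ Y, g y ∈ Y

/-- Lengths of strictly increasing chains of nonempty closed invariant sets ending at `univ`. -/
def heightSet {X : Type*} [TopologicalSpace X] (G : Subgroup (X ≃ₜ X)) : Set ℕ :=
  {n | ∃ Y : Fin (n + 1) → Set X,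
    StrictMono Y ∧ (∀ i, (Y i).Nonempty ∧ IsClosed (Y i) ∧ InvariantUnder G (Y i)) ∧
    Y (Fin.last n) = Set.univ}

/-- The height of a transformation group. -/
def height {X : Type*} [TopologicalSpace X] (G : Subgroup (X ≃ₜ X)) : ℕ∞ :=
  sSup ((fun n : ℕ => (n : ℕ∞)) '' heightSet G)

/-- The set of achievable heights on phase space `X`. -/
def PH (X : Type*) [TopologicalSpace X] : Set ℕ∞ :=
  {h | ∃ G : Subgroup (X ≃ₜ X), height G = h}

end
noncomputable section

/-- A presentation of a topological graph: a finite union of arcs, any two of which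
meet in at most their endpoints. -/
structure GraphStruct (X : Type*) [TopologicalSpace X] where
  numEdges : ℕ
  edge : Fin numEdges → unitInterval → X
  cont : ∀ i, Continuous (edge i)
  inj : ∀ i, Function.Injective (edge i)
  cover : ∀ x : X, ∃ i t, edge i t = x
  meet : ∀ i j, i ≠ j → ∀ s t, edge i s = edge j t → (s = 0 ∨ s = 1) ∧ (t = 0 ∨ t = 1)

/-- The vertices: endpoints of the arcs. -/
def GraphStruct.vertexSet {X : Type*} [TopologicalSpace X] (G : GraphStruct X) : Set X :=
  {v | ∃ i, G.edge i 0 = v ∨ G.edge i 1 = v}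

/-- The degree of a point: the number of edge-ends at it. -/
def GraphStruct.degree {X : Type*} [TopologicalSpace X] (G : GraphStruct X) (v : X) : ℕ :=
  Set.ncard {p : Fin G.numEdges × Bool | G.edge p.1 (if p.2 then 1 else 0) = v}

/-- The (closed) edges, as subsets of `X`. -/
def GraphStruct.edgeSet {X : Type*} [TopologicalSpace X] (G : GraphStruct X) : Set (Set X) :=
  Set.range fun i => Set.range (G.edge i)

end

/-- Homeomorphisms preserving a labelling. -/
def labelGroup {X : Type*} [TopologicalSpace X] (Φ : X → ℕ) : Subgroup (X ≃ₜ X) where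
  carrier := {g | ∀ x, Φ (g x) = Φ x}
  mul_mem' := by
    intro a b ha hb x
    exact (ha (b x)).trans (hb x)
  one_mem' := fun x => rfl
  inv_mem' := by
    intro a ha x
    have h := ha (a.symm x)
    rw [a.apply_symm_apply] at h
    exact h.symm

theorem height_label {X : Type*} [TopologicalSpace X] (n : ℕ) (Φ : X → ℕ)
    (hle : ∀ x, Φ x ≤ n) (hsurj : ∀ k ≤ n, ∃ x, Φ x = k)
    (hcl : ∀ k, IsClosed {x | Φ x ≤ k})
    (htr : ∀ x y, Φ x = Φ y → ∃ g : X ≃ₜ X, (∀ z, Φ (g z) = Φ z) ∧ g x = y) :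
    height (labelGroup Φ) = n := by
  classical
  apply le_antisymm
  · apply sSup_le
    rintro _ ⟨m, ⟨Y, hY, hY2, -⟩, rfl⟩
    have hlev : ∀ i x y, x ∈ Y i → Φ x = Φ y → y ∈ Y i := by
      intro i x y hx hxy
      obtain ⟨g, hg, rfl⟩ := htr x y hxy
      exact (hY2 i).2.2 g hg x hx
    let S : Fin (m + 1) → Finset ℕ := fun i => (Finset.range (n + 1)).filter (fun k => k ∈ Φ '' Y i)
    have hS : StrictMono S := by
      intro i j hij
      refine Finset.ssubset_iff_subset_ne.2 ⟨?_, ?_⟩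
      · intro k hk
        simp only [S, Finset.mem_filter] at hk ⊢
        exact ⟨hk.1, Set.image_mono (hY hij).le hk.2⟩
      · intro h
        apply (hY hij).not_ge
        intro y hy
        have : Φ y ∈ S j := by
          simp only [S, Finset.mem_filter, Finset.mem_range]
          exact ⟨Nat.lt_succ_of_le (hle y), y, hy, rfl⟩
        rw [← h] at this
        simp only [S, Finset.mem_filter] at this
        obtain ⟨x, hx, hxy⟩ := this.2
        exact hlev i x y hx hxy
    have hpos : ∀ i, 0 < (S i).card := by
      intro i
      obtain ⟨x, hx⟩ := (hY2 i).1
      apply Finset.card_pos.2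
      refine ⟨Φ x, ?_⟩
      simp only [S, Finset.mem_filter, Finset.mem_range]
      exact ⟨Nat.lt_succ_of_le (hle x), x, hx, rfl⟩
    have hub : ∀ i, (S i).card ≤ n + 1 := by
      intro i
      refine (Finset.card_filter_le _ _).trans (by simp)
    have hc : StrictMono (fun i => (S i).card) := fun i j hij => Finset.card_lt_card (hS hij)
    let F : Fin (m + 1) → Fin (n + 1) := fun i => ⟨(S i).card - 1, by have := hpos i; have := hub i; omega⟩
    have hF : Function.Injective F := by
      intro i j hij
      apply hc.injective
      have := Fin.mk.inj_iff.1 hij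
      have h1 := hpos i
      have h2 := hpos j
      simp only
      omega
    have := Fintype.card_le_of_injective F hF
    simp at this
    exact Nat.cast_le.2 this
  · apply le_sSup
    refine ⟨n, ⟨fun i => {x | Φ x ≤ i}, ?_, ?_, ?_⟩, rfl⟩
    · intro i j hij
      refine (Set.ssubset_iff_of_subset ?_).2 ?_
      · intro x hx
        have : (i : ℕ) < j := hij
        simp only [Set.mem_ofPred_eq] at hx ⊢
        omega
      · obtain ⟨x, hx⟩ := hsurj j (by omega)
        refine ⟨x, by simp [hx], ?_⟩
        have : (i : ℕ) < j := hij
        simp only [Set.mem_ofPred_eq]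
        omega
    · intro i
      refine ⟨?_, hcl i, ?_⟩
      · obtain ⟨x, hx⟩ := hsurj 0 (by omega)
        exact ⟨x, by simp [hx]⟩
      · intro g hg y hy
        have := hg y
        simp only [Set.mem_ofPred_eq] at hy ⊢
        omega
    · ext x
      simpa using hle x

theorem height_bot {X : Type*} [TopologicalSpace X] [T1Space X] [Infinite X] :
    height (⊥ : Subgroup (X ≃ₜ X)) = ⊤ := by
  rw [height, ENat.eq_top_iff_forall_ge]
  intro m
  apply le_sSup
  refine ⟨m, ?_, rfl⟩
  let f := Infinite.natEmbedding X
  refine ⟨fun i => if (i : ℕ) = m then Set.univ else f '' {k | k ≤ i}, ?_, ?_, ?_⟩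
  · intro i j hij
    have hij' : (i : ℕ) < j := hij
    have hi : (i : ℕ) ≠ m := by omega
    simp only [hi, if_false]
    refine (Set.ssubset_iff_of_subset ?_).2 ?_
    · split_ifs
      · exact Set.subset_univ _
      · exact Set.image_mono (fun k hk => le_trans hk hij'.le)
    · refine ⟨f j, ?_, ?_⟩
      · split_ifs
        · trivial
        · exact ⟨j, by simp, rfl⟩
      · rintro ⟨k, hk, hkj⟩
        have := f.injective hkj
        simp only [Set.mem_ofPred_eq] at hk
        omega
  · intro i
    refine ⟨?_, ?_, ?_⟩
    · simp only
      split_ifs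
      · exact ⟨f 0, trivial⟩
      · exact ⟨f 0, 0, by simp, rfl⟩
    · simp only
      split_ifs
      · exact isClosed_univ
      · exact ((Set.finite_le_nat _).image _).isClosed
    · intro g hg y hy
      rw [Subgroup.mem_bot] at hg
      subst hg
      exact hy
  · simp

theorem exists_uv : ∃ u v : ℝ → ℝ, (∀ a b, u a < u b ↔ a < b) ∧ (∀ y, 0 < u y ∧ u y < 1) ∧
    (∀ y, v (u y) = y) ∧ (∀ x, 0 < x → x < 1 → u (v x) = x) ∧ ContinuousOn v (Set.Ioo 0 1) := by
  let o := orderIsoIooNegOneOne ℝ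
  have hmem : ∀ x : ℝ, 0 < x → x < 1 → 2 * x - 1 ∈ Set.Ioo (-1 : ℝ) 1 := by
    intro x h0 h1
    constructor <;> linarith
  refine ⟨fun y => ((o y : ℝ) + 1) / 2,
    fun x => if h : 2 * x - 1 ∈ Set.Ioo (-1 : ℝ) 1 then o.symm ⟨2 * x - 1, h⟩ else 0,
    ?_, ?_, ?_, ?_, ?_⟩
  · intro a b
    rw [← o.lt_iff_lt (x := a), ← Subtype.coe_lt_coe]
    constructor <;> intro h <;> linarith
  · intro y
    have := (o y).2
    constructor
    · linarith [this.1]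
    · linarith [this.2]
  · intro y
    have h : 2 * (((o y : ℝ) + 1) / 2) - 1 = o y := by ring
    simp only [h]
    rw [dif_pos (o y).2]
    simp
  · intro x h0 h1
    simp only
    rw [dif_pos (hmem x h0 h1)]
    simp
  · rw [continuousOn_iff_continuous_domRestrict]
    have : (Set.Ioo (0 : ℝ) 1).domRestrict (fun x => if h : 2 * x - 1 ∈ Set.Ioo (-1 : ℝ) 1 then o.symm ⟨2 * x - 1, h⟩ else 0)
        = fun x => o.symm ⟨2 * x.1 - 1, hmem x.1 x.2.1 x.2.2⟩ := by
      funext x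
      simp only [Set.domRestrict_apply]
      rw [dif_pos (hmem x.1 x.2.1 x.2.2)]
    rw [this]
    apply o.symm.continuous.comp
    fun_prop

noncomputable def uu : ℝ → ℝ := exists_uv.choose
noncomputable def vv : ℝ → ℝ := exists_uv.choose_spec.choose
theorem uu_lt {a b : ℝ} : uu a < uu b ↔ a < b := exists_uv.choose_spec.choose_spec.1 a b
theorem uu_pos (y : ℝ) : 0 < uu y := (exists_uv.choose_spec.choose_spec.2.1 y).1
theorem uu_lt_one (y : ℝ) : uu y < 1 := (exists_uv.choose_spec.choose_spec.2.1 y).2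
theorem vv_uu (y : ℝ) : vv (uu y) = y := exists_uv.choose_spec.choose_spec.2.2.1 y
theorem uu_vv {x : ℝ} (h0 : 0 < x) (h1 : x < 1) : uu (vv x) = x :=
  exists_uv.choose_spec.choose_spec.2.2.2.1 x h0 h1
theorem vv_cont : ContinuousOn vv (Set.Ioo 0 1) := exists_uv.choose_spec.choose_spec.2.2.2.2

theorem floor_uu (m : ℤ) (y : ℝ) : ⌊(m : ℝ) + uu y⌋ = m := by
  rw [Int.floor_eq_iff]
  have := uu_pos y
  have := uu_lt_one y
  constructor <;> linarith

theorem fract_uu (m : ℤ) (y : ℝ) : Int.fract ((m : ℝ) + uu y) = uu y := by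
  rw [Int.fract, floor_uu]; ring

theorem real_dec (x : ℝ) : (∃ m : ℤ, x = m) ∨ ∃ (m : ℤ) (y : ℝ), x = m + uu y := by
  by_cases h : Int.fract x = 0
  · left
    refine ⟨⌊x⌋, ?_⟩
    rw [Int.fract] at h; linarith
  · right
    refine ⟨⌊x⌋, vv (Int.fract x), ?_⟩
    rw [uu_vv (lt_of_le_of_ne (Int.fract_nonneg x) (Ne.symm h)) (Int.fract_lt_one x)]
    exact (Int.floor_add_fract x).symm

/-- the labels -/
noncomputable def lab : ℕ → ℝ → ℕ
  | 0, _ => 0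
  | n + 1, x => if Int.fract x = 0 then 0 else 1 + lab n (vv (Int.fract x))

theorem lab_int (n : ℕ) (m : ℤ) : lab (n + 1) (m : ℝ) = 0 := by simp [lab]
theorem lab_uu (n : ℕ) (m : ℤ) (y : ℝ) : lab (n + 1) (m + uu y) = 1 + lab n y := by
  rw [lab, fract_uu, if_neg (uu_pos y).ne', vv_uu]

theorem lab_add_int (n : ℕ) (x : ℝ) (m : ℤ) : lab n (x + m) = lab n x := by
  cases n <;> simp [lab]

theorem lab_le (n : ℕ) : ∀ x, lab n x ≤ n := by
  induction n with
  | zero => intro x; simp [lab]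
  | succ n ih =>
    intro x
    rw [lab]
    split_ifs
    · omega
    · have := ih (vv (Int.fract x)); omega

theorem lab_surj (n : ℕ) : ∀ k ≤ n, ∃ x, lab n x = k := by
  induction n with
  | zero => intro k hk; exact ⟨0, by simp [lab]; omega⟩
  | succ n ih =>
    intro k hk
    cases k with
    | zero => exact ⟨((0 : ℤ) : ℝ), lab_int n 0⟩
    | succ k =>
      obtain ⟨y, hy⟩ := ih k (by omega)
      exact ⟨((0 : ℤ) : ℝ) + uu y, by rw [lab_uu, hy]; omega⟩

theorem lab_open (n : ℕ) : ∀ k, IsOpen {x | k < lab n x} := by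
  induction n with
  | zero => intro k; simp [lab]
  | succ n ih =>
    intro k
    have ho : IsOpen {y | k < 1 + lab n y} := by
      cases k with
      | zero => simp
      | succ k =>
        have h : {y | k + 1 < 1 + lab n y} = {y | k < lab n y} := by
          ext y; simp only [Set.mem_ofPred_eq]; omega
        rw [h]; exact ih k
    have : {x | k < lab (n + 1) x} = ⋃ m : ℤ, Set.Ioo (m : ℝ) (m + 1) ∩
        (fun x => vv (x - m)) ⁻¹' {y | k < 1 + lab n y} := by
      ext x
      simp only [Set.mem_ofPred_eq, Set.mem_iUnion, Set.mem_inter_iff, Set.mem_Ioo, Set.mem_preimage]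
      constructor
      · intro hx
        rcases real_dec x with ⟨m, rfl⟩ | ⟨m, y, rfl⟩
        · rw [lab_int] at hx; omega
        · refine ⟨m, ⟨by linarith [uu_pos y], by linarith [uu_lt_one y]⟩, ?_⟩
          rw [lab_uu] at hx
          rw [add_sub_cancel_left, vv_uu]
          exact hx
      · rintro ⟨m, ⟨h1, h2⟩, h3⟩
        have h4 : x = m + uu (vv (x - m)) := by
          rw [uu_vv (by linarith) (by linarith)]; ring
        rw [h4, lab_uu]
        exact h3
    rw [this]
    apply isOpen_iUnion
    intro m
    apply ContinuousOn.isOpen_inter_preimage _ isOpen_Ioo ho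
    apply vv_cont.comp (by fun_prop)
    intro x hx
    exact ⟨by linarith [hx.1], by linarith [hx.2]⟩

/-- periodic extension -/
noncomputable def pext (g : ℝ ≃o ℝ) (x : ℝ) : ℝ :=
  if Int.fract x = 0 then x else ⌊x⌋ + uu (g (vv (Int.fract x)))

theorem ext_int (g : ℝ ≃o ℝ) (m : ℤ) : pext g m = m := by simp [pext]
theorem ext_uu (g : ℝ ≃o ℝ) (m : ℤ) (y : ℝ) : pext g (m + uu y) = m + uu (g y) := by
  rw [pext, fract_uu, if_neg (uu_pos y).ne', vv_uu, floor_uu]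

theorem ext_strictMono (g : ℝ ≃o ℝ) : StrictMono (pext g) := by
  intro x y hxy
  rcases real_dec x with ⟨m, rfl⟩ | ⟨m, a, rfl⟩ <;> rcases real_dec y with ⟨k, rfl⟩ | ⟨k, b, rfl⟩
  · rwa [ext_int, ext_int]
  · rw [ext_int, ext_uu]
    have h : (m : ℝ) < (k + 1 : ℤ) := by push_cast; linarith [uu_lt_one b]
    have h : m ≤ k := by have := Int.cast_lt.1 h; omega
    have h : (m : ℝ) ≤ k := by exact_mod_cast h
    linarith [uu_pos (g b)]
  · rw [ext_int, ext_uu]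
    have h : (m : ℝ) < k := by linarith [uu_pos a]
    have h : m + 1 ≤ k := by exact_mod_cast h
    have h : (m : ℝ) + 1 ≤ k := by exact_mod_cast h
    linarith [uu_lt_one (g a)]
  · rw [ext_uu, ext_uu]
    have h : (m : ℝ) < (k + 1 : ℤ) := by push_cast; linarith [uu_lt_one b, uu_pos a]
    have h : m ≤ k := by have := Int.cast_lt.1 h; omega
    rcases h.lt_or_eq with h | rfl
    · have h : (m : ℝ) + 1 ≤ k := by exact_mod_cast h
      linarith [uu_lt_one (g a), uu_pos (g b)]
    · have : uu a < uu b := by linarith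
      have : uu (g a) < uu (g b) := by
        rw [uu_lt] at this ⊢
        exact g.strictMono this
      linarith

theorem ext_symm (g : ℝ ≃o ℝ) (x : ℝ) : pext g (pext g.symm x) = x := by
  rcases real_dec x with ⟨m, rfl⟩ | ⟨m, a, rfl⟩
  · rw [ext_int, ext_int]
  · rw [ext_uu, ext_uu, g.apply_symm_apply]

noncomputable def extIso (g : ℝ ≃o ℝ) : ℝ ≃o ℝ :=
  StrictMono.orderIsoOfRightInverse (pext g) (ext_strictMono g) (pext g.symm) (ext_symm g)

theorem lab_trans (n : ℕ) : ∀ x y, lab n x = lab n y → ∃ g : ℝ ≃o ℝ,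
    (∀ z, g (z + 1) = g z + 1) ∧ (∀ z, lab n (g z) = lab n z) ∧ g x = y := by
  induction n with
  | zero =>
    intro x y _
    refine ⟨OrderIso.addRight (y - x), ?_, ?_, ?_⟩
    · intro z; simp; ring
    · intro z; simp [lab]
    · simp
  | succ n ih =>
    intro x y hxy
    rcases real_dec x with ⟨m, rfl⟩ | ⟨m, a, rfl⟩ <;>
      rcases real_dec y with ⟨k, rfl⟩ | ⟨k, b, rfl⟩
    · refine ⟨OrderIso.addRight ((k - m : ℤ) : ℝ), ?_, ?_, ?_⟩
      · intro z; simp; ring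
      · intro z; exact lab_add_int (n + 1) z (k - m)
      · simp
    · rw [lab_int, lab_uu] at hxy; omega
    · rw [lab_int, lab_uu] at hxy; omega
    · rw [lab_uu, lab_uu] at hxy
      obtain ⟨g, -, hg, hab⟩ := ih a b (by omega)
      have hlab : ∀ z, lab (n + 1) (pext g z) = lab (n + 1) z := by
        intro z
        rcases real_dec z with ⟨l, rfl⟩ | ⟨l, c, rfl⟩
        · rw [ext_int]
        · rw [ext_uu, lab_uu, lab_uu, hg]
      refine ⟨(extIso g).trans (OrderIso.addRight ((k - m : ℤ) : ℝ)), ?_, ?_, ?_⟩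
      · intro z
        have : pext g (z + 1) = pext g z + 1 := by
          rcases real_dec z with ⟨l, rfl⟩ | ⟨l, c, rfl⟩
          · have := ext_int g (l + 1)
            push_cast at this
            rw [ext_int, this]
          · have := ext_uu g (l + 1) c
            push_cast at this
            rw [ext_uu, show (l : ℝ) + uu c + 1 = l + 1 + uu c by ring, this]
            ring
        change pext g (z + 1) + _ = pext g z + _ + 1
        rw [this]; ring
      · intro z
        exact (lab_add_int (n + 1) (pext g z) (k - m)).trans (hlab z)
      · change pext g (m + uu a) + ((k - m : ℤ) : ℝ) = _
        rw [ext_uu, hab]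
        push_cast; ring

theorem lab_periodic (n : ℕ) : Function.Periodic (lab n) 1 := by
  intro x
  have := lab_add_int n x 1
  push_cast at this
  exact this

theorem periodic_coe {g : ℝ → ℝ} (hg : ∀ z, g (z + 1) = g z + 1) :
    Function.Periodic (fun z => ((g z : ℝ) : AddCircle (1 : ℝ))) 1 := by
  intro z
  simp only [hg]
  exact AddCircle.coe_add_period 1 (g z)

theorem descend (g : ℝ ≃o ℝ) (hg : ∀ z, g (z + 1) = g z + 1) :
    ∃ h : AddCircle (1 : ℝ) ≃ₜ AddCircle (1 : ℝ), ∀ z : ℝ, h (z : AddCircle (1 : ℝ)) = (g z : ℝ) := by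
  have hg' : ∀ z, g.symm (z + 1) = g.symm z + 1 := by
    intro z
    apply g.injective
    rw [hg]; simp
  refine ⟨{ toFun := (periodic_coe hg).lift, invFun := (periodic_coe hg').lift
            left_inv := ?_, right_inv := ?_
            continuous_toFun := ?_
            continuous_invFun := ?_ }, ?_⟩
  · intro x
    induction x using QuotientAddGroup.induction_on with | _ z => ?_
    rw [Function.Periodic.lift_coe, Function.Periodic.lift_coe]; simp
  · intro x
    induction x using QuotientAddGroup.induction_on with | _ z => ?_
    rw [Function.Periodic.lift_coe, Function.Periodic.lift_coe]; simp
  · refine continuous_coinduced_dom.2 ?_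
    exact (AddCircle.continuous_mk' 1).comp g.continuous
  · refine continuous_coinduced_dom.2 ?_
    exact (AddCircle.continuous_mk' 1).comp g.symm.continuous
  · intro z
    exact Function.Periodic.lift_coe (periodic_coe hg) z

theorem PH_circle {X : Type*} [TopologicalSpace X] (e : X ≃ₜ Circle) : PH X = Set.univ := by
  apply Set.eq_univ_of_forall
  intro h
  let e' : X ≃ₜ AddCircle (1 : ℝ) := e.trans (AddCircle.homeomorphCircle one_ne_zero).symm
  induction h using ENat.recTopCoe with
  | top =>
    have : T1Space X := e.symm.t1Space
    have : Infinite (AddCircle (1 : ℝ)) := by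
      have : Fact ((0 : ℝ) < 1) := ⟨one_pos⟩
      have : Infinite (Set.Ico (0 : ℝ) (0 + 1)) := Set.infinite_coe_iff.2 (Set.Ico_infinite (by norm_num))
      exact (AddCircle.equivIco (1 : ℝ) 0).infinite_iff.2 inferInstance
    have : Infinite X := e'.toEquiv.infinite_iff.2 inferInstance
    exact ⟨⊥, height_bot⟩
  | coe n =>
    let Φ : AddCircle (1 : ℝ) → ℕ := (lab_periodic n).lift
    have hΦ : ∀ z : ℝ, Φ z = lab n z := fun z => Function.Periodic.lift_coe (lab_periodic n) z
    refine ⟨labelGroup (fun x => Φ (e' x)), height_label n _ ?_ ?_ ?_ ?_⟩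
    · intro x
      generalize e' x = y
      induction y using QuotientAddGroup.induction_on with | _ z => ?_
      simp only [hΦ]
      exact lab_le n z
    · intro k hk
      obtain ⟨z, hz⟩ := lab_surj n k hk
      exact ⟨e'.symm z, by simp [hΦ, hz]⟩
    · intro k
      have : IsClosed {y | Φ y ≤ k} := by
        have hq : IsQuotientMap (QuotientAddGroup.mk : ℝ → AddCircle (1 : ℝ)) :=
          QuotientAddGroup.isQuotientMap_mk _
        rw [← hq.isClosed_preimage, ← isOpen_compl_iff]
        convert lab_open n k using 1
        ext z
        simp [hΦ]
      exact this.preimage e'.continuous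
    · intro x y hxy
      obtain ⟨a, ha⟩ := QuotientAddGroup.mk_surjective (e' x)
      obtain ⟨b, hb⟩ := QuotientAddGroup.mk_surjective (e' y)
      have hab : lab n a = lab n b := by
        rw [← hΦ, ← hΦ]
        exact (congrArg Φ ha).trans (hxy.trans (congrArg Φ hb).symm)
      obtain ⟨g, hg1, hg2, hg3⟩ := lab_trans n a b hab
      obtain ⟨h, hh⟩ := descend g hg1
      refine ⟨(e'.trans h).trans e'.symm, ?_, ?_⟩
      · intro z
        simp only [Homeomorph.trans_apply, Homeomorph.apply_symm_apply]
        generalize e' z = y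
        induction y using QuotientAddGroup.induction_on with | _ z => ?_
        rw [hh, hΦ, hΦ, hg2]
      · simp only [Homeomorph.trans_apply]
        rw [← ha, hh, hg3]
        exact (congrArg e'.symm hb).trans (by simp)

/-- `k` arcs issuing from `v`, disjoint away from `v`. -/
def ArcStar {X : Type*} [TopologicalSpace X] (k : ℕ) (v : X) : Prop :=
  ∃ a : Fin k → I → X, (∀ i, Continuous (a i)) ∧ (∀ i, Function.Injective (a i)) ∧
    (∀ i, a i 0 = v) ∧ ∀ i j, i ≠ j → ∀ s t, a i s = a j t → s = 0

theorem ArcStar.homeo {X : Type*} [TopologicalSpace X] {k : ℕ} {v : X} (h : ArcStar k v) (g : X ≃ₜ X) :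
    ArcStar k (g v) := by
  obtain ⟨a, h1, h2, h3, h4⟩ := h
  refine ⟨fun i s => g (a i s), fun i => g.continuous.comp (h1 i), fun i => g.injective.comp (h2 i),
    fun i => by simp only [h3], fun i j hij s t hst => h4 i j hij s t (g.injective hst)⟩

theorem ArcStar.mono {X : Type*} [TopologicalSpace X] {k l : ℕ} {v : X} (h : ArcStar k v) (hl : l ≤ k) :
    ArcStar l v := by
  obtain ⟨a, h1, h2, h3, h4⟩ := h
  refine ⟨fun i => a (Fin.castLE hl i), fun i => h1 _, fun i => h2 _, fun i => h3 _,
    fun i j hij s t hst => h4 _ _ ?_ s t hst⟩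
  intro h
  exact hij (Fin.castLE_injective hl h)

theorem star_card {X : Type*} [TopologicalSpace X] {ι : Type*} [Fintype ι] (v : X)
    (r : ι → I → X) (hc : ∀ p, Continuous (r p)) (hi : ∀ p, Function.Injective (r p))
    (h0 : ∀ p, r p 0 = v) (hd : ∀ p q, p ≠ q → ∀ s t, r p s = r q t → s = 0) :
    ArcStar (Fintype.card ι) v := by
  let e := (Fintype.equivFin ι).symm
  exact ⟨fun i => r (e i), fun i => hc _, fun i => hi _, fun i => h0 _,
    fun i j hij s t hst => hd _ _ (fun h => hij (e.injective h)) s t hst⟩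

theorem star_le {X : Type*} [TopologicalSpace X] [T2Space X] {ι : Type*} [Fintype ι] (v : X)
    (r : ι → I → X) (hc : ∀ p, Continuous (r p)) (hi : ∀ p, Function.Injective (r p))
    (h0 : ∀ p, r p 0 = v) (hd : ∀ p q, p ≠ q → ∀ s t, r p s = r q t → s = 0)
    (ho : ∀ p, IsOpen (r p '' Set.Ioo 0 1))
    (hV : insert v (⋃ p, r p '' Set.Ioo 0 1) ∈ 𝓝 v) {k : ℕ} (hk : ArcStar k v) :
    k ≤ Fintype.card ι := by
  obtain ⟨a, a1, a2, a3, a4⟩ := hk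
  have key : ∀ i, ∃ (p : ι) (e : I), 0 < e ∧ ∀ t, 0 < t → t ≤ e → a i t ∈ r p '' Set.Ioo 0 1 := by
    intro i
    have hn : (a i) ⁻¹' (insert v (⋃ p, r p '' Set.Ioo 0 1)) ∈ 𝓝 (0 : I) := by
      apply (a1 i).continuousAt.preimage_mem_nhds
      rw [a3]; exact hV
    obtain ⟨u, hu, hsub⟩ := exists_Ico_subset_of_mem_nhds hn ⟨1, zero_lt_one⟩
    obtain ⟨e, he0, heu⟩ := exists_between hu
    have hmem : ∀ t, 0 < t → t ≤ e → a i t ∈ ⋃ p, r p '' Set.Ioo 0 1 := by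
      intro t ht hte
      have := hsub ⟨ht.le, hte.trans_lt heu⟩
      rcases this with h | h
      · exfalso
        rw [← a3 i] at h
        exact ht.ne' (a2 i h)
      · exact h
    obtain ⟨p, hp⟩ := Set.mem_iUnion.1 (hmem e he0 le_rfl)
    refine ⟨p, e, he0, ?_⟩
    have hpre : IsPreconnected (a i '' Set.Ioc 0 e) :=
      isPreconnected_Ioc.image _ (a1 i).continuousOn
    have := hpre.subset_left_of_subset_union (u := r p '' Set.Ioo 0 1)
      (v := ⋃ q : {q // q ≠ p}, r q '' Set.Ioo 0 1) (ho p) (isOpen_iUnion fun q => ho q) ?_ ?_ ?_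
    · intro t ht hte
      exact this ⟨t, ⟨ht, hte⟩, rfl⟩
    · rw [Set.disjoint_left]
      rintro x ⟨s, hs, rfl⟩ hx
      obtain ⟨q, t, ht, hst⟩ := Set.mem_iUnion.1 hx
      exact ht.1.ne' (hd q p q.2 t s hst)
    · rintro _ ⟨t, ht, rfl⟩
      obtain ⟨q, hq⟩ := Set.mem_iUnion.1 (hmem t ht.1 ht.2)
      by_cases hqp : q = p
      · left; rw [← hqp]; exact hq
      · right; exact Set.mem_iUnion.2 ⟨⟨q, hqp⟩, hq⟩
    · exact ⟨a i e, ⟨e, ⟨he0, le_rfl⟩, rfl⟩, hp⟩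
  choose p e he hpe using key
  have hinj : Function.Injective p := by
    intro i j hij
    by_contra hne
    have ivt : ∀ i, ∃ b : I, 0 < b ∧ ∀ c, c ≤ b → ∃ t, a i t = r (p i) c := by
      intro i
      obtain ⟨b, hb, hbe⟩ := hpe i (e i) (he i) le_rfl
      refine ⟨b, hb.1, ?_⟩
      have hind := ((hc (p i)).isClosedEmbedding (hi (p i))).isInducing
      have hK : IsPreconnected ((r (p i)) ⁻¹' (a i '' Set.Icc 0 (e i))) := by
        rw [← hind.isPreconnected_image, Set.image_preimage_eq_of_subset]
        · exact isPreconnected_Icc.image _ (a1 i).continuousOn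
        · rintro _ ⟨t, ht, rfl⟩
          rcases ht.1.eq_or_lt with h | h
          · exact ⟨0, by rw [← h, a3, h0]⟩
          · obtain ⟨s, -, hs⟩ := hpe i t h ht.2
            exact ⟨s, hs⟩
      intro c hcb
      have := hK.Icc_subset (a := 0) (b := b) ⟨0, ⟨le_rfl, (he i).le⟩, by rw [a3, h0]⟩
        ⟨e i, ⟨(he i).le, le_rfl⟩, hbe.symm⟩ ⟨c.2.1, hcb⟩
      obtain ⟨t, -, ht⟩ := this
      exact ⟨t, ht⟩
    obtain ⟨b, hb, hb'⟩ := ivt i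
    obtain ⟨b2, hb2, hb2'⟩ := ivt j
    obtain ⟨s, hs⟩ := hb' (min b b2) (min_le_left _ _)
    obtain ⟨t, ht⟩ := hb2' (min b b2) (min_le_right _ _)
    rw [← hij, ← hs] at ht
    have := a4 i j hne s t ht.symm
    rw [this, a3, ← h0 (p i)] at hs
    have := hi _ hs
    exact (lt_min hb hb2).ne this
  simpa using Fintype.card_le_of_injective p hinj

theorem exists_seg (a b : I) (hab : a ≠ b) : ∃ ρ : I → I, Continuous ρ ∧ Function.Injective ρ ∧
    ρ 0 = a ∧ ρ '' Set.Ioo 0 1 = Set.Ioo (min a b) (max a b) ∧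
    ∀ s, min a b ≤ ρ s ∧ ρ s ≤ max a b := by
  have hab' : (a : ℝ) ≠ b := fun h => hab (Subtype.ext h)
  have hbet : ∀ s : I, min (a : ℝ) b ≤ (1 - s) * a + s * b ∧ (1 - s) * (a : ℝ) + s * b ≤ max (a : ℝ) b := by
    intro s
    have h0 := s.2.1
    have h1 := s.2.2
    rcases le_total (a : ℝ) b with h | h
    · rw [min_eq_left h, max_eq_right h]
      constructor <;> nlinarith
    · rw [min_eq_right h, max_eq_left h]
      constructor <;> nlinarith
  have hmin : ((min a b : I) : ℝ) = min (a : ℝ) b := by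
    rcases le_total a b with h | h
    · rw [min_eq_left h, min_eq_left (Subtype.coe_le_coe.2 h)]
    · rw [min_eq_right h, min_eq_right (Subtype.coe_le_coe.2 h)]
  have hmax : ((max a b : I) : ℝ) = max (a : ℝ) b := by
    rcases le_total a b with h | h
    · rw [max_eq_right h, max_eq_right (Subtype.coe_le_coe.2 h)]
    · rw [max_eq_left h, max_eq_left (Subtype.coe_le_coe.2 h)]
  refine ⟨fun s => ⟨(1 - s) * a + s * b, (le_min a.2.1 b.2.1).trans (hbet s).1,
    (hbet s).2.trans (max_le a.2.2 b.2.2)⟩, ?_, ?_, ?_, ?_, ?_⟩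
  · fun_prop
  · intro s t hst
    have h := congrArg Subtype.val hst
    simp only at h
    have h : ((s : ℝ) - t) * (b - a) = 0 := by linarith
    rcases mul_eq_zero.1 h with h | h
    · exact Subtype.ext (by linarith)
    · exact absurd (by linarith) hab'
  · ext; simp
  · ext x
    constructor
    · rintro ⟨s, ⟨hs0, hs1⟩, rfl⟩
      have hs0 : (0 : ℝ) < s := hs0
      have hs1 : (s : ℝ) < 1 := hs1
      constructor
      · rw [← Subtype.coe_lt_coe, hmin]
        change min (a : ℝ) b < (1 - s) * a + s * b
        rcases lt_or_gt_of_ne hab' with h | h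
        · rw [min_eq_left h.le]; nlinarith
        · rw [min_eq_right h.le]; nlinarith
      · rw [← Subtype.coe_lt_coe, hmax]
        change (1 - s) * (a : ℝ) + s * b < max (a : ℝ) b
        rcases lt_or_gt_of_ne hab' with h | h
        · rw [max_eq_right h.le]; nlinarith
        · rw [max_eq_left h.le]; nlinarith
    · rintro ⟨h1, h2⟩
      rw [← Subtype.coe_lt_coe, hmin] at h1
      rw [← Subtype.coe_lt_coe, hmax] at h2
      have hne : (b : ℝ) - a ≠ 0 := fun h => hab' (by linarith)
      have hpos : 0 < ((x : ℝ) - a) / (b - a) ∧ ((x : ℝ) - a) / (b - a) < 1 := by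
        rcases lt_or_gt_of_ne hab' with h | h
        · rw [min_eq_left h.le] at h1
          rw [max_eq_right h.le] at h2
          have : (0 : ℝ) < b - a := by linarith
          exact ⟨div_pos (by linarith) this, (div_lt_one this).2 (by linarith)⟩
        · rw [min_eq_right h.le] at h1
          rw [max_eq_left h.le] at h2
          have : (b : ℝ) - a < 0 := by linarith
          exact ⟨div_pos_of_neg_of_neg (by linarith) this, (div_lt_one_of_neg this).2 (by linarith)⟩
      refine ⟨⟨((x : ℝ) - a) / (b - a), hpos.1.le, hpos.2.le⟩, ⟨hpos.1, hpos.2⟩, ?_⟩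
      ext
      simp only
      field_simp
      ring
  · intro s
    constructor
    · rw [← Subtype.coe_le_coe, hmin]; exact (hbet s).1
    · rw [← Subtype.coe_le_coe, hmax]; exact (hbet s).2

section graph
variable {X : Type*} [TopologicalSpace X] [T2Space X] (G : GraphStruct X)

theorem GraphStruct.mem_nhds' (S : Set X) (v : X)
    (h : ∀ j t, G.edge j t = v → G.edge j ⁻¹' S ∈ 𝓝 t) : S ∈ 𝓝 v := by
  have hcl : IsClosed (⋃ j, G.edge j '' closure (G.edge j ⁻¹' Sᶜ)) := by
    apply isClosed_iUnion_of_finite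
    intro j
    exact (isClosed_closure.isCompact.image (G.cont j)).isClosed
  have hv : (⋃ j, G.edge j '' closure (G.edge j ⁻¹' Sᶜ))ᶜ ∈ 𝓝 v := by
    apply hcl.isOpen_compl.mem_nhds
    intro hv
    obtain ⟨j, t, ht, rfl⟩ := Set.mem_iUnion.1 hv
    rw [Set.preimage_compl, closure_compl] at ht
    exact ht (mem_interior_iff_mem_nhds.2 (h j t rfl))
  refine Filter.mem_of_superset hv ?_
  intro x hx
  by_contra hxS
  apply hx
  obtain ⟨j, t, rfl⟩ := G.cover x
  exact Set.mem_iUnion.2 ⟨j, t, subset_closure hxS, rfl⟩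

theorem GraphStruct.isOpen' (S : Set X)
    (h : ∀ j, IsOpen (G.edge j ⁻¹' S)) : IsOpen S := by
  rw [isOpen_iff_mem_nhds]
  intro v hv
  apply G.mem_nhds'
  intro j t ht
  exact (h j).mem_nhds (by rw [Set.mem_preimage, ht]; exact hv)

theorem GraphStruct.isOpen_Ioo (i : Fin G.numEdges) (c d : I) : IsOpen (G.edge i '' Set.Ioo c d) := by
  apply G.isOpen'
  intro j
  by_cases hij : i = j
  · subst hij
    rw [Set.preimage_image_eq _ (G.inj i)]
    exact _root_.isOpen_Ioo
  · convert isOpen_empty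
    rw [Set.eq_empty_iff_forall_notMem]
    rintro t ⟨s, hs, hst⟩
    rcases (G.meet i j hij s t hst).1 with rfl | rfl
    · exact not_lt_of_ge c.2.1 hs.1
    · exact not_lt_of_ge d.2.2 hs.2

theorem GraphStruct.star_interior (v : X) (hv : v ∉ G.vertexSet) : ArcStar 2 v ∧ ¬ ArcStar 3 v := by
  obtain ⟨i, t0, rfl⟩ := G.cover v
  have ht0 : t0 ≠ 0 := by rintro rfl; exact hv ⟨i, Or.inl rfl⟩
  have ht1 : t0 ≠ 1 := by rintro rfl; exact hv ⟨i, Or.inr rfl⟩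
  have ht0' : 0 < t0 := unitInterval.pos_iff_ne_zero.2 ht0
  have ht1' : t0 < 1 := unitInterval.lt_one_iff_ne_one.2 ht1
  have hb : ∀ b : Bool, ∃ ρ : I → I, Continuous ρ ∧ Function.Injective ρ ∧ ρ 0 = t0 ∧
      ρ '' Set.Ioo 0 1 = (if b then Set.Ioo t0 1 else Set.Ioo 0 t0) ∧
      ∀ s, if b then t0 ≤ ρ s else ρ s ≤ t0 := by
    intro b
    cases b
    · obtain ⟨ρ, h1, h2, h3, h4, h5⟩ := exists_seg t0 0 ht0
      rw [min_eq_right ht0'.le, max_eq_left ht0'.le] at h4 h5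
      exact ⟨ρ, h1, h2, h3, by simpa using h4, fun s => by simpa using (h5 s).2⟩
    · obtain ⟨ρ, h1, h2, h3, h4, h5⟩ := exists_seg t0 1 ht1
      rw [min_eq_left ht1'.le, max_eq_right ht1'.le] at h4 h5
      exact ⟨ρ, h1, h2, h3, by simpa using h4, fun s => by simpa using (h5 s).1⟩
  choose ρ h1 h2 h3 h4 h5 using hb
  have hd : ∀ p q, p ≠ q → ∀ s t, G.edge i (ρ p s) = G.edge i (ρ q t) → s = 0 := by
    intro p q hpq s t hst
    have hst := G.inj i hst
    apply h2 p
    rw [h3]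
    have e1 := h5 p s
    have e2 := h5 q t
    rw [← hst] at e2
    cases p <;> cases q <;> simp at hpq e1 e2
    · exact le_antisymm e1 e2
    · exact le_antisymm e2 e1
  have hS := star_card (G.edge i t0) (fun b s => G.edge i (ρ b s)) (fun b => (G.cont i).comp (h1 b))
    (fun b => (G.inj i).comp (h2 b)) (fun b => by simp only [h3]) hd
  refine ⟨by simpa using hS, fun h3' => ?_⟩
  have him : ∀ b, (fun s => G.edge i (ρ b s)) '' Set.Ioo 0 1 =
      G.edge i '' (if b then Set.Ioo t0 1 else Set.Ioo 0 t0) := by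
    intro b
    rw [← h4 b, Set.image_image]
  have := star_le (G.edge i t0) (fun b s => G.edge i (ρ b s)) (fun b => (G.cont i).comp (h1 b))
    (fun b => (G.inj i).comp (h2 b)) (fun b => by simp only [h3]) hd ?_ ?_ h3'
  · simp at this
  · intro b
    rw [him]
    cases b
    · simpa using G.isOpen_Ioo i 0 t0
    · simpa using G.isOpen_Ioo i t0 1
  · apply G.mem_nhds'
    intro j t hjt
    have hji : j = i := by
      by_contra hne
      rcases (G.meet j i hne t t0 hjt).2 with h | h
      · exact ht0 h
      · exact ht1 h
    subst hji
    have := G.inj j hjt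
    subst this
    refine Filter.mem_of_superset (Ioo_mem_nhds ht0' ht1') ?_
    intro x hx
    simp only [him]
    rcases lt_trichotomy x t with h | h | h
    · right; exact Set.mem_iUnion.2 ⟨false, x, by simpa using ⟨hx.1, h⟩, rfl⟩
    · left; rw [h]
    · right; exact Set.mem_iUnion.2 ⟨true, x, by simpa using ⟨h, hx.2⟩, rfl⟩

theorem GraphStruct.star_vertex (v : X) (hv : v ∈ G.vertexSet) :
    (ArcStar 2 v ∧ ¬ ArcStar 3 v) → G.degree v = 2 := by
  classical
  let D := {p : Fin G.numEdges × Bool // G.edge p.1 (if p.2 then 1 else 0) = v}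
  have hcard : G.degree v = Fintype.card D := by
    rw [GraphStruct.degree, ← Nat.card_coe_set_eq, ← Nat.card_eq_fintype_card]
    rfl
  obtain ⟨hf, hf0, hf1⟩ : ∃ hf : I, 0 < hf ∧ hf < 1 := exists_between zero_lt_one
  have hb : ∀ b : Bool, ∃ ρ : I → I, Continuous ρ ∧ Function.Injective ρ ∧
      ρ 0 = (if b then 1 else 0) ∧
      ρ '' Set.Ioo 0 1 = (if b then Set.Ioo hf 1 else Set.Ioo 0 hf) ∧
      ∀ s, if b then hf ≤ ρ s else ρ s ≤ hf := by
    intro b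
    cases b
    · obtain ⟨ρ, h1, h2, h3, h4, h5⟩ := exists_seg 0 hf hf0.ne
      rw [min_eq_left hf0.le, max_eq_right hf0.le] at h4 h5
      exact ⟨ρ, h1, h2, h3, by simpa using h4, fun s => by simpa using (h5 s).2⟩
    · obtain ⟨ρ, h1, h2, h3, h4, h5⟩ := exists_seg 1 hf hf1.ne'
      rw [min_eq_right hf1.le, max_eq_left hf1.le] at h4 h5
      exact ⟨ρ, h1, h2, h3, by simpa using h4, fun s => by simpa using (h5 s).1⟩
  choose ρ h1 h2 h3 h4 h5 using hb
  let r : D → I → X := fun p s => G.edge p.1.1 (ρ p.1.2 s)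
  have hc : ∀ p, Continuous (r p) := fun p => (G.cont _).comp (h1 _)
  have hi : ∀ p, Function.Injective (r p) := fun p => (G.inj _).comp (h2 _)
  have h0 : ∀ p, r p 0 = v := fun p => by simp only [r, h3]; exact p.2
  have hd : ∀ p q, p ≠ q → ∀ s t, r p s = r q t → s = 0 := by
    rintro ⟨⟨i, b⟩, hp⟩ ⟨⟨j, c⟩, hq⟩ hpq s t hst
    by_cases hij : i = j
    · subst hij
      exfalso
      apply hpq
      have := G.inj i (hp.trans hq.symm)
      congr
      cases b <;> cases c <;> simp at this ⊢
    · have hm := (G.meet i j hij _ _ hst).1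
      simp only at hm
      apply h2 b
      rw [h3]
      have e := h5 b s
      cases b <;> simp at e ⊢
      · rcases hm with h | h
        · exact h
        · rw [h] at e; exact absurd hf1 (not_lt_of_ge e)
      · rcases hm with h | h
        · rw [h] at e; exact absurd hf0 (not_lt_of_ge e)
        · exact h
  have him : ∀ p, r p '' Set.Ioo 0 1 =
      G.edge p.1.1 '' (if p.1.2 then Set.Ioo hf 1 else Set.Ioo 0 hf) := by
    intro p
    rw [← h4, Set.image_image]
  have hS := star_card v r hc hi h0 hd
  have hle : ∀ {k}, ArcStar k v → k ≤ Fintype.card D := by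
    intro k hk
    refine star_le v r hc hi h0 hd ?_ ?_ hk
    · intro p
      rw [him]
      split_ifs
      · exact G.isOpen_Ioo _ _ _
      · exact G.isOpen_Ioo _ _ _
    · apply G.mem_nhds'
      intro j t hjt
      have ht : t = 0 ∨ t = 1 := by
        obtain ⟨i, hi'⟩ := hv
        by_cases hij : j = i
        · subst hij
          rcases hi' with h | h
          · left; exact G.inj j (hjt.trans h.symm)
          · right; exact G.inj j (hjt.trans h.symm)
        · rcases hi' with h | h
          · exact (G.meet j i hij _ _ (hjt.trans h.symm)).1
          · exact (G.meet j i hij _ _ (hjt.trans h.symm)).1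
      simp only [him]
      rcases ht with rfl | rfl
      · refine Filter.mem_of_superset (Iio_mem_nhds hf0) ?_
        intro x hx
        by_cases hx0 : x = 0
        · left; rw [hx0, hjt]
        · right
          refine Set.mem_iUnion.2 ⟨⟨(j, false), by simpa using hjt⟩, x, ?_, rfl⟩
          simpa using ⟨unitInterval.pos_iff_ne_zero.2 hx0, hx⟩
      · refine Filter.mem_of_superset (Ioi_mem_nhds hf1) ?_
        intro x hx
        by_cases hx0 : x = 1
        · left; rw [hx0, hjt]
        · right
          refine Set.mem_iUnion.2 ⟨⟨(j, true), by simpa using hjt⟩, x, ?_, rfl⟩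
          simpa using ⟨hx, unitInterval.lt_one_iff_ne_one.2 hx0⟩
  rintro ⟨s2, s3⟩
  rw [hcard]
  apply le_antisymm _ (hle s2)
  by_contra hcon
  exact s3 (hS.mono (by omega))

theorem GraphStruct.degree_of_minimal [Nonempty X] (H : Subgroup (X ≃ₜ X)) (hH : height H = 0) :
    ∀ v ∈ G.vertexSet, G.degree v = 2 := by
  intro v hv
  apply G.star_vertex v hv
  by_contra hcon
  let D : Set X := {x | ¬ (ArcStar 2 x ∧ ¬ ArcStar 3 x)}
  have hDv : D ⊆ G.vertexSet := by
    intro x hx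
    by_contra h
    exact hx (G.star_interior x h)
  have hfin : G.vertexSet.Finite := by
    refine ((Set.finite_range (fun i => G.edge i 0)).union
      (Set.finite_range (fun i => G.edge i 1))).subset ?_
    rintro x ⟨i, h | h⟩
    · left; exact ⟨i, h⟩
    · right; exact ⟨i, h⟩
  have hX : Infinite X := by
    obtain ⟨i, -, -⟩ := G.cover (Classical.arbitrary X)
    have : Infinite I := Set.infinite_coe_iff.2 (Set.Icc_infinite zero_lt_one)
    exact Infinite.of_injective (G.edge i) (G.inj i)
  have hDf := hfin.subset hDv
  have hinv : InvariantUnder H D := by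
    intro g _ y hy hgy
    apply hy
    refine ⟨?_, fun h => hgy.2 (h.homeo g)⟩
    have := hgy.1.homeo g.symm
    simpa using this
  have h1 : 1 ∈ heightSet H := by
    refine ⟨![D, Set.univ], ?_, ?_, ?_⟩
    · rw [Fin.strictMono_iff_lt_succ]
      intro i
      fin_cases i
      simp only [Fin.zero_eta, Fin.castSucc_zero, Matrix.cons_val_zero, Fin.succ_zero_eq_one, Matrix.cons_val_one]
      refine Set.ssubset_univ_iff.2 ?_
      intro h
      rw [h] at hDf
      exact Set.infinite_univ hDf
    · intro i
      fin_cases i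
      · exact ⟨⟨v, hcon⟩, hDf.isClosed, hinv⟩
      · exact ⟨Set.univ_nonempty, isClosed_univ, fun _ _ _ _ => trivial⟩
    · rfl
  have : ((1 : ℕ) : ℕ∞) ≤ height H := le_sSup ⟨1, h1, rfl⟩
  rw [hH] at this
  simp at this

end graph

section build
variable {X : Type*} [TopologicalSpace X] (G : GraphStruct X)

/-- starting point of a dart -/
def GraphStruct.start (p : Fin G.numEdges × Bool) : X := G.edge p.1 (if p.2 then 1 else 0)

/-- reversal of a dart -/
def GraphStruct.rev (p : Fin G.numEdges × Bool) : Fin G.numEdges × Bool := (p.1, !p.2)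

theorem GraphStruct.rev_rev (p : Fin G.numEdges × Bool) : G.rev (G.rev p) = p := by
  simp [GraphStruct.rev]

theorem GraphStruct.rev_ne (p : Fin G.numEdges × Bool) : G.rev p ≠ p := by
  intro h
  have := congrArg Prod.snd h
  simp [GraphStruct.rev] at this

theorem GraphStruct.exists_tau (hdeg : ∀ v ∈ G.vertexSet, G.degree v = 2) :
    ∃ τ : Fin G.numEdges × Bool → Fin G.numEdges × Bool,
      (∀ p, τ p ≠ p) ∧ (∀ p, G.start (τ p) = G.start p) ∧
      (∀ p q, G.start q = G.start p → q = p ∨ q = τ p) ∧ ∀ p, τ (τ p) = p := by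
  have h : ∀ p, ∃ q, q ≠ p ∧ G.start q = G.start p ∧ ∀ q', G.start q' = G.start p → q' = p ∨ q' = q := by
    intro p
    have hv : G.start p ∈ G.vertexSet := by
      refine ⟨p.1, ?_⟩
      unfold GraphStruct.start
      split_ifs
      · right; rfl
      · left; rfl
    have h2 := hdeg _ hv
    rw [GraphStruct.degree, Set.ncard_eq_two] at h2
    obtain ⟨x, y, hxy, hS⟩ := h2
    have hmem : ∀ q, G.start q = G.start p ↔ q = x ∨ q = y := by
      intro q
      have : q ∈ {q : Fin G.numEdges × Bool | G.edge q.1 (if q.2 then 1 else 0) = G.start p} ↔ q ∈ ({x, y} : Set _) := by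
        rw [hS]
      simp only [Set.mem_ofPred_eq, Set.mem_insert_iff, Set.mem_singleton_iff] at this
      exact this
    rcases (hmem p).1 rfl with rfl | rfl
    · exact ⟨y, hxy.symm, (hmem y).2 (Or.inr rfl), fun q' hq' => (hmem q').1 hq'⟩
    · exact ⟨x, hxy, (hmem x).2 (Or.inl rfl), fun q' hq' => ((hmem q').1 hq').symm⟩
  choose τ h1 h2 h3 using h
  refine ⟨τ, h1, h2, h3, fun p => ?_⟩
  rcases h3 p (τ (τ p)) ((h2 _).trans (h2 _)) with h | h
  · exact h
  · exact absurd h (h1 _)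

/-- parametrised dart -/
noncomputable def GraphStruct.par (p : Fin G.numEdges × Bool) (t : ℝ) : X :=
  G.edge p.1 (Set.projIcc 0 1 zero_le_one (if p.2 then 1 - t else t))

theorem GraphStruct.par_cont (p : Fin G.numEdges × Bool) : Continuous (G.par p) := by
  apply (G.cont p.1).comp
  apply continuous_projIcc.comp
  split_ifs <;> fun_prop

theorem GraphStruct.par_zero (p : Fin G.numEdges × Bool) : G.par p 0 = G.start p := by
  unfold GraphStruct.par GraphStruct.start
  split_ifs
  · simp
  · simp

theorem GraphStruct.par_one (p : Fin G.numEdges × Bool) : G.par p 1 = G.start (G.rev p) := by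
  unfold GraphStruct.par GraphStruct.start GraphStruct.rev
  cases p.2 <;> simp

theorem GraphStruct.par_inj (p : Fin G.numEdges × Bool) {s t : ℝ} (hs : s ∈ Set.Icc (0 : ℝ) 1)
    (ht : t ∈ Set.Icc (0 : ℝ) 1) (h : G.par p s = G.par p t) : s = t := by
  have h := G.inj _ h
  have hs' : 1 - s ∈ Set.Icc (0 : ℝ) 1 := ⟨by linarith [hs.2], by linarith [hs.1]⟩
  have ht' : 1 - t ∈ Set.Icc (0 : ℝ) 1 := ⟨by linarith [ht.2], by linarith [ht.1]⟩
  split_ifs at h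
  · have := (Set.strictMonoOn_projIcc zero_le_one).injOn hs' ht' h
    linarith
  · exact (Set.strictMonoOn_projIcc zero_le_one).injOn hs ht h

theorem GraphStruct.par_end (p : Fin G.numEdges × Bool) {s : ℝ} (hs : s ∈ Set.Ico (0 : ℝ) 1)
    {j : Fin G.numEdges} (hj : j ≠ p.1) {t : I} (h : G.edge j t = G.par p s) :
    s = 0 ∧ (t = 0 ∨ t = 1) := by
  have hm := G.meet _ _ hj _ _ h
  refine ⟨?_, hm.1⟩
  have hs' : 1 - s ∈ Set.Icc (0 : ℝ) 1 := ⟨by linarith [hs.2], by linarith [hs.1]⟩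
  have hs2 : s ∈ Set.Icc (0 : ℝ) 1 := ⟨hs.1, hs.2.le⟩
  have hm := hm.2
  split_ifs at hm
  · rw [Set.projIcc_of_mem _ hs'] at hm
    rcases hm with h | h
    · have := congrArg Subtype.val h
      simp at this
      linarith [hs.2]
    · have := congrArg Subtype.val h
      simpa using this
  · rw [Set.projIcc_of_mem _ hs2] at hm
    rcases hm with h | h
    · have := congrArg Subtype.val h
      simpa using this
    · have := congrArg Subtype.val h
      simp at this
      linarith [hs.2]

theorem no_rev {D : Type*} (sg : Equiv.Perm D) (τ R : D → D) (hsg : ∀ p, sg p = τ (R p))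
    (hR : ∀ p, R (R p) = p) (hτ : ∀ p, τ (τ p) = p) (hRn : ∀ p, R p ≠ p) (hτn : ∀ p, τ p ≠ p) :
    ∀ (m : ℤ) (p : D), (sg ^ m) p ≠ R p := by
  have hRsg : ∀ p, sg (R (sg p)) = R p := by
    intro p
    rw [hsg, hR, hsg, hτ]
  have hnat : ∀ (m : ℕ) (p : D), (sg ^ m) p ≠ R p := by
    intro m
    induction m using Nat.strong_induction_on with
    | _ m ih =>
      intro p h
      match m, ih, h with
      | 0, _, h => exact hRn p (by simpa using h.symm)
      | 1, _, h =>
        rw [pow_one, hsg] at h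
        exact hτn _ h
      | k + 2, ih, h =>
        apply ih k (by omega) (sg p)
        apply sg.injective
        rw [hRsg, ← h, ← Equiv.Perm.mul_apply, ← Equiv.Perm.mul_apply, ← pow_succ', ← pow_succ]
  intro m p h
  obtain ⟨k, rfl | rfl⟩ := m.eq_nat_or_neg
  · exact hnat k p (by simpa using h)
  · apply hnat k (R p)
    rw [hR, ← h, zpow_neg, zpow_natCast]
    simp

theorem GraphStruct.circle_of_degree [T2Space X] [ConnectedSpace X]
    (hdeg : ∀ v ∈ G.vertexSet, G.degree v = 2) : Nonempty (X ≃ₜ Circle) := by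
  classical
  obtain ⟨τ, τ1, τ2, τ3, τ4⟩ := G.exists_tau hdeg
  let sg : Equiv.Perm (Fin G.numEdges × Bool) :=
    { toFun := fun p => τ (G.rev p), invFun := fun p => G.rev (τ p)
      left_inv := fun p => by simp [τ4, G.rev_rev]
      right_inv := fun p => by simp [τ4, G.rev_rev] }
  have hsg : ∀ p, sg p = τ (G.rev p) := fun p => rfl
  have hno := no_rev sg τ G.rev hsg G.rev_rev τ4 G.rev_ne τ1
  obtain ⟨i0, -, -⟩ := G.cover (Classical.arbitrary X)
  let d : ℤ → Fin G.numEdges × Bool := fun k => (sg ^ k) (i0, true)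
  have dsucc : ∀ k, d (k + 1) = sg (d k) := by
    intro k
    simp only [d]
    rw [add_comm, zpow_add, zpow_one, Equiv.Perm.mul_apply]
  have dno : ∀ k l, d k ≠ G.rev (d l) := by
    intro k l h
    apply hno (k - l) (d l)
    rw [← h]
    simp only [d]
    rw [← Equiv.Perm.mul_apply, ← zpow_add, sub_add_cancel]
  -- darts at the starting point of `d k`
  have dstart : ∀ k q, G.start q = G.start (d k) → q = d k ∨ q = G.rev (d (k - 1)) := by
    intro k q hq
    rcases τ3 _ _ hq with h | h
    · exact Or.inl h
    · right
      have := dsucc (k - 1)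
      rw [sub_add_cancel, hsg] at this
      rw [h, this, τ4]
  have dend : ∀ k, G.par (d k) 1 = G.par (d (k + 1)) 0 := by
    intro k
    rw [G.par_one, G.par_zero, dsucc, hsg, τ2]
  let N := Function.minimalPeriod sg (i0, true)
  have hNpos : 0 < N := Function.minimalPeriod_pos_of_mem_periodicPts
    (Function.Injective.mem_periodicPts sg.injective (i0, true))
  have hdN : ∀ k l, d k = d l ↔ (N : ℤ) ∣ l - k := by
    intro k l
    have h1 := MulAction.zpow_smul_eq_iff_minimalPeriod_dvd (a := sg) (b := (i0, true)) (n := l - k)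
    have h2 : d k = d l ↔ (sg ^ (l - k)) • ((i0, true) : Fin G.numEdges × Bool) = (i0, true) := by
      simp only [d, Equiv.Perm.smul_def]
      rw [← (sg ^ k).injective.eq_iff (a := (sg ^ (l - k)) (i0, true)), ← Equiv.Perm.mul_apply,
        ← zpow_add, add_sub_cancel, eq_comm]
    rw [h2, h1]
    rfl
  let f : ℝ → X := fun x => G.par (d ⌊x⌋) (Int.fract x)
  have ffloor : ∀ (k : ℤ) (x : ℝ), (k : ℝ) ≤ x → x < k + 1 → f x = G.par (d k) (x - k) := by
    intro k x h1 h2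
    have : ⌊x⌋ = k := Int.floor_eq_iff.2 ⟨h1, h2⟩
    simp only [f, Int.fract, this]
  have fIcc : ∀ (k : ℤ) (x : ℝ), (k : ℝ) ≤ x → x ≤ k + 1 → f x = G.par (d k) (x - k) := by
    intro k x h1 h2
    rcases h2.lt_or_eq with h2 | h2
    · exact ffloor k x h1 h2
    · rw [ffloor (k + 1) x (by push_cast; linarith) (by push_cast; linarith), h2]
      push_cast
      rw [sub_self, add_sub_cancel_left, dend]
  have hfc : Continuous f := by
    rw [continuous_iff_continuousAt]
    intro x
    have hF : ∀ k : ℤ, Continuous (fun x : ℝ => G.par (d k) (x - k)) := fun k =>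
      (G.par_cont _).comp (by fun_prop)
    have hx1 := Int.floor_le x
    have hx2 := Int.lt_floor_add_one x
    rw [continuousAt_iff_continuous_left_right]
    constructor
    · by_cases hx : (⌊x⌋ : ℝ) = x
      · have hIcc : Set.Icc ((⌊x⌋ - 1 : ℤ) : ℝ) x ∈ 𝓝[≤] x :=
          Icc_mem_nhdsLE (by push_cast; linarith)
        have := (hF (⌊x⌋ - 1)).continuousWithinAt (s := Set.Iic x) (x := x)
        refine this.congr_of_eventuallyEq ?_ ?_
        · filter_upwards [hIcc] with y hy
          exact fIcc _ y hy.1 (by push_cast; linarith [hy.2])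
        · exact fIcc _ x (by push_cast; linarith) (by push_cast; linarith)
      · have hlt : (⌊x⌋ : ℝ) < x := lt_of_le_of_ne hx1 hx
        have hIcc : Set.Icc (⌊x⌋ : ℝ) x ∈ 𝓝[≤] x := Icc_mem_nhdsLE hlt
        have := (hF ⌊x⌋).continuousWithinAt (s := Set.Iic x) (x := x)
        refine this.congr_of_eventuallyEq ?_ ?_
        · filter_upwards [hIcc] with y hy
          exact fIcc _ y hy.1 (by linarith [hy.2])
        · exact fIcc _ x hx1 hx2.le
    · have hIcc : Set.Icc x (⌊x⌋ + 1 : ℝ) ∈ 𝓝[≥] x := Icc_mem_nhdsGE hx2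
      have := (hF ⌊x⌋).continuousWithinAt (s := Set.Ici x) (x := x)
      refine this.congr_of_eventuallyEq ?_ ?_
      · filter_upwards [hIcc] with y hy
        exact fIcc _ y (hx1.trans hy.1) hy.2
      · exact fIcc _ x hx1 hx2.le
  have hper : Function.Periodic f (N : ℝ) := by
    intro x
    have h1 : ⌊x + (N : ℝ)⌋ = ⌊x⌋ + N := Int.floor_add_natCast x N
    have h2 : d (⌊x⌋ + N) = d ⌊x⌋ := ((hdN _ _).2 (by simp)).symm
    simp only [f, h1, h2, Int.fract_add_natCast]
  have hfr : ∀ x : ℝ, Int.fract x ∈ Set.Ico (0 : ℝ) 1 := fun x =>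
    ⟨Int.fract_nonneg x, Int.fract_lt_one x⟩
  have hfr' : ∀ x : ℝ, Int.fract x ∈ Set.Icc (0 : ℝ) 1 := fun x =>
    ⟨Int.fract_nonneg x, (Int.fract_lt_one x).le⟩
  have hinj : ∀ x y, f x = f y → ∃ m : ℤ, y = x + m * N := by
    intro x y hxy
    have hdd : d ⌊x⌋ = d ⌊y⌋ := by
      by_cases hij : (d ⌊x⌋).1 = (d ⌊y⌋).1
      · by_contra hne
        apply dno ⌊x⌋ ⌊y⌋
        refine Prod.ext hij ?_
        have : (d ⌊x⌋).2 ≠ (d ⌊y⌋).2 := fun h => hne (Prod.ext hij h)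
        simp only [GraphStruct.rev]
        revert this
        cases (d ⌊x⌋).2 <;> cases (d ⌊y⌋).2 <;> simp
      · have hx := (G.par_end (d ⌊y⌋) (hfr y) hij hxy).1
        have hy := (G.par_end (d ⌊x⌋) (hfr x) (Ne.symm hij) hxy.symm).1
        simp only [f, hx, hy, G.par_zero] at hxy
        rcases dstart _ _ hxy with h | h
        · exact h
        · exact absurd h (dno _ _)
    obtain ⟨m, hm⟩ := (hdN _ _).1 hdd
    have hst : Int.fract x = Int.fract y := by
      apply G.par_inj (d ⌊x⌋) (hfr' x) (hfr' y)
      simp only [f] at hxy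
      rw [hxy, hdd]
    refine ⟨m, ?_⟩
    have h1 := Int.floor_add_fract x
    have h2 := Int.floor_add_fract y
    have h3 : (⌊y⌋ : ℝ) - ⌊x⌋ = N * m := by exact_mod_cast hm
    linarith
  have hN0 : (0 : ℝ) < N := by exact_mod_cast hNpos
  have : Fact ((0 : ℝ) < N) := ⟨hN0⟩
  let F : AddCircle (N : ℝ) → X := hper.lift
  have hF : ∀ z : ℝ, F z = f z := fun z => Function.Periodic.lift_coe hper z
  have hFc : Continuous F := continuous_coinduced_dom.2 hfc
  have hrange : Set.range F = Set.range f := by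
    ext x
    constructor
    · rintro ⟨y, rfl⟩
      induction y using QuotientAddGroup.induction_on with | _ z => ?_
      exact ⟨z, (hF z).symm⟩
    · rintro ⟨z, rfl⟩
      exact ⟨z, hF z⟩
  have hclosed : IsClosed (Set.range F) := (isCompact_range hFc).isClosed
  have hopen : IsOpen (Set.range F) := by
    rw [hrange]
    apply G.isOpen'
    intro j
    by_cases hj : ∃ k, (d k).1 = j
    · obtain ⟨k, rfl⟩ := hj
      convert isOpen_univ
      apply Set.eq_univ_of_forall
      intro t
      have ht0 := t.2.1
      have ht1 := t.2.2
      by_cases hb : (d k).2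
      · refine ⟨k + (1 - t), ?_⟩
        rw [fIcc k _ (by linarith) (by linarith)]
        simp [GraphStruct.par, hb]
      · refine ⟨k + t, ?_⟩
        rw [fIcc k _ (by linarith) (by linarith)]
        simp [GraphStruct.par, hb]
    · convert isOpen_empty
      rw [Set.eq_empty_iff_forall_notMem]
      rintro t ⟨x, hx⟩
      have hne : j ≠ (d ⌊x⌋).1 := fun h => hj ⟨_, h.symm⟩
      obtain ⟨h0, ht⟩ := G.par_end (d ⌊x⌋) (hfr x) hne hx.symm
      simp only [f, h0, G.par_zero] at hx
      have : ∃ b : Bool, G.start (j, b) = G.start (d ⌊x⌋) := by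
        rcases ht with rfl | rfl
        · exact ⟨false, by rw [hx]; simp [GraphStruct.start]⟩
        · exact ⟨true, by rw [hx]; simp [GraphStruct.start]⟩
      obtain ⟨b, hb⟩ := this
      rcases dstart _ _ hb with h | h
      · exact hj ⟨_, (congrArg Prod.fst h).symm⟩
      · exact hj ⟨_, (congrArg Prod.fst h).symm⟩
  have hsurj : Function.Surjective F := by
    rw [← Set.range_eq_univ]
    exact IsClopen.eq_univ ⟨hclosed, hopen⟩ ⟨F 0, 0, rfl⟩
  have hFinj : Function.Injective F := by
    intro a b hab
    induction a using QuotientAddGroup.induction_on with | _ x => ?_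
    induction b using QuotientAddGroup.induction_on with | _ y => ?_
    obtain ⟨m, rfl⟩ := hinj x y hab
    symm
    rw [← sub_eq_zero, ← QuotientAddGroup.mk_sub]
    refine AddCircle.coe_eq_zero_iff _ |>.2 ⟨m, ?_⟩
    simp
  let e : AddCircle (N : ℝ) ≃ₜ X :=
    Continuous.homeoOfEquivCompactToT2 (f := Equiv.ofBijective F ⟨hFinj, hsurj⟩) hFc
  exact ⟨e.symm.trans (AddCircle.homeomorphCircle hN0.ne')⟩

end build

/-- For a topological graph `X` the following are equivalent: `X` is a circle; some group
of homeomorphisms acts minimally (`0 ∈ P_h(X)`); every vertex has degree `2`. In that case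
`P_h(X) = {0, 1, 2, …} ∪ {+∞}`. -/
theorem graph_circle_tfae (X : Type*) [MetricSpace X] [CompactSpace X]
    [ConnectedSpace X] (G : GraphStruct X) :
    (Nonempty (X ≃ₜ Circle) ↔ ∃ H : Subgroup (X ≃ₜ X), height H = 0) ∧
    (Nonempty (X ≃ₜ Circle) ↔ ∀ v ∈ G.vertexSet, G.degree v = 2) ∧
    (Nonempty (X ≃ₜ Circle) → PH X = Set.univ) := by
  have h34 : (∃ H : Subgroup (X ≃ₜ X), height H = 0) → ∀ v ∈ G.vertexSet, G.degree v = 2 := by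
    rintro ⟨H, hH⟩
    exact G.degree_of_minimal H hH
  have h13 : Nonempty (X ≃ₜ Circle) → ∃ H : Subgroup (X ≃ₜ X), height H = 0 := by
    rintro ⟨e⟩
    have h : (0 : ℕ∞) ∈ PH X := by
      rw [PH_circle e]
      trivial
    exact h
  have h41 : (∀ v ∈ G.vertexSet, G.degree v = 2) → Nonempty (X ≃ₜ Circle) := G.circle_of_degree
  exact ⟨⟨h13, fun h => h41 (h34 h)⟩, ⟨fun h => h34 (h13 h), h41⟩, fun ⟨e⟩ => PH_circle e⟩
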